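/- There exists an infinite word over a 3-letter alphabet that simultaneously avoids the formula ABCA.CABC.BCB and its reverse ABCA.BCAB.CBC. (This gives the upper bound λ(ABCA.CABC.BCB) ≤ 3 and λ(ABCA.BCAB.CBC) ≤ 3.) -/

import Mathlib

/-- `u` is a factor of the infinite word `x`: for some index `i`,
`u` equals the block `x i, x (i+1), …` of length `|u|`. -/
def IsFactorOfInf {α : Type*} (u : List α) (x : ℕ → α) : Prop :=
  ∃ i : ℕ, u = (List.range u.length).map fun j => x (i + j)

/-!
Both formulas contain, up to renaming the variables, the fragments `ABCA` and `CABC` together with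
`BCB` or `BAB`. If every repetition of excess `u ≥ 3` has period at least `3 * u`, the lengths of
`A`, `B` and `C` in such an occurrence bound each other so tightly that all three are at most `2`,
and only finitely many factors remain to be inspected.

The word is the image under a 24-uniform morphism of the fixed point of a 13-uniform morphism on 8
letters. Both morphisms are recognizable: a long repetition therefore has a period divisible by the
block length and comes from a repetition of the preimage, shorter by that factor, with nearly the
same ratio of excess to period. Descending reduces the bound to short repetitions, which are visible
in the images of three consecutive letters.
-/

section Windows

variable {α : Type*} {w w' : ℕ → α} {s t u n p : ℕ}

/-- The factor of length `n` of the infinite word `w` starting at position `s`. -/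
def window (w : ℕ → α) (s n : ℕ) : List α := (List.range n).map fun j => w (s + j)

theorem window_eq_window_iff :
    window w s n = window w' t n ↔ ∀ j < n, w (s + j) = w' (t + j) := by
  simp [window]

theorem length_window : (window w s n).length = n := by
  simp [window]

theorem window_add (m n : ℕ) : window w s (m + n) = window w s m ++ window w (s + m) n := by
  simp [window, List.range_add, add_assoc]

theorem isFactorOfInf_iff_exists_window {v : List α} :
    IsFactorOfInf v w ↔ ∃ i, v = window w i v.length :=
  Iff.rfl

/-- `w` has a repetition of period `p` and excess `u` at `s`: the factor of length `u` at `s` occurs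
again at `s + p`, so that the factor of length `p + u` at `s` has period `p`. -/
def Repeats (w : ℕ → α) (s u p : ℕ) : Prop := window w s u = window w (s + p) u

instance [DecidableEq α] : Decidable (Repeats w s u p) :=
  inferInstanceAs (Decidable (_ = _))

theorem Repeats.window_eq (h : Repeats w s u p) {j : ℕ} (hj : j + n ≤ u) :
    window w (s + j) n = window w (s + p + j) n :=
  window_eq_window_iff.2 fun i hi => by
    simpa only [add_assoc] using window_eq_window_iff.1 h (j + i) (by omega)

theorem Repeats.of_le (h : Repeats w s u p) (hn : n ≤ u) : Repeats w s n p :=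
  h.window_eq (j := 0) (by omega)

/-- Every repetition of excess `u ≥ m` has period at least `R * u`, hence exponent at most
`1 + 1 / R`. -/
def RepetitionBound (w : ℕ → α) (R m : ℕ) : Prop :=
  ∀ ⦃s u p⦄, m ≤ u → 0 < p → Repeats w s u p → R * u ≤ p

theorem RepetitionBound.of_isFactorOfInf {R m : ℕ} (hw : RepetitionBound w R m) {U V : List α}
    (hU : U ≠ []) (hf : IsFactorOfInf (U ++ V ++ U) w) (hm : m ≤ U.length) :
    R * U.length ≤ U.length + V.length := by
  obtain ⟨i, hi⟩ := isFactorOfInf_iff_exists_window.1 hf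
  simp only [List.length_append, window_add] at hi
  obtain ⟨hUV, hlast⟩ := List.append_inj hi (by simp [length_window])
  have hfirst := List.append_inj_left hUV (by simp [length_window])
  exact hw hm (by have := List.length_pos_of_ne_nil hU; omega) (hfirst.symm.trans hlast)

theorem length_le_two_of_repetitionBound (hw : RepetitionBound w 3 3) {A B C : List α}
    (hA : A ≠ []) (hB : B ≠ []) (hC : C ≠ []) (hABCA : IsFactorOfInf (A ++ B ++ C ++ A) w)
    (hCABC : IsFactorOfInf (C ++ A ++ B ++ C) w)
    (hBCB : IsFactorOfInf (B ++ C ++ B) w ∨ IsFactorOfInf (B ++ A ++ B) w) :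
    A.length ≤ 2 ∧ B.length ≤ 2 ∧ C.length ≤ 2 := by
  have hAlen := hw.of_isFactorOfInf (V := B ++ C) hA (by simpa using hABCA)
  have hClen := hw.of_isFactorOfInf (V := A ++ B) hC (by simpa using hCABC)
  have hBlen (h : 3 ≤ B.length) : 3 * B.length ≤ B.length + max A.length C.length := by
    rcases hBCB with hBCB | hBAB
    · exact (hw.of_isFactorOfInf hB hBCB h).trans (by omega)
    · exact (hw.of_isFactorOfInf hB hBAB h).trans (by omega)
  simp only [List.length_append] at hAlen hClen
  omega

end Windows

section BlockSubst

variable {α β : Type*} {L : ℕ} {f : β → ℕ → α} {z z' : ℕ → β}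

/-- The image of the infinite word `z` under the `L`-uniform morphism that sends a letter `b` to
the block `f b 0, …, f b (L - 1)`. -/
def blockSubst (L : ℕ) (f : β → ℕ → α) (z : ℕ → β) (i : ℕ) : α := f (z (i / L)) (i % L)

/-- The infinite word `a b c c c …`, standing for the at most three letters of `z` that a short
window of `blockSubst L f z` can see. -/
def triple (a b c : β) : ℕ → β
  | 0 => a
  | 1 => b
  | _ => c

theorem apply_add_eq_triple_of_lt_three {q k : ℕ} (hk : k < 3) :
    z (q + k) = triple (z q) (z (q + 1)) (z (q + 2)) k := by
  interval_cases k <;> rfl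

theorem apply_add_eq_triple_of_lt_two {q k : ℕ} (hk : k < 2) :
    z (q + k) = triple (z q) (z (q + 1)) (z (q + 1)) k := by
  interval_cases k <;> rfl

theorem blockSubst_mul_add (hL : 0 < L) {q i : ℕ} (h : z (q + i / L) = z' (i / L)) :
    blockSubst L f z (L * q + i) = blockSubst L f z' i := by
  simp only [blockSubst, Nat.mul_add_div hL, Nat.mul_add_mod, h]

theorem window_blockSubst {q i n : ℕ} (hL : 0 < L)
    (h : ∀ k, L * k < i + n → z (q + k) = z' k) :
    window (blockSubst L f z) (L * q + i) n = window (blockSubst L f z') i n :=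
  window_eq_window_iff.2 fun j hj => by
    rw [add_assoc]
    exact blockSubst_mul_add hL (h _ ((Nat.mul_div_le (i + j) L).trans_lt (by omega)))

end BlockSubst

section Descent

variable {α β : Type*} {w : ℕ → α} {f : β → ℕ → α} {z : ℕ → β} {L R R' m M n c s u p : ℕ}

/-- No repetition starting at one of the first `L` positions of `w` has an excess `u ∈ [m, M)` and
a period less than `R * u`. For each period only the least such excess has to be tested. -/
def NoShortRepetition (w : ℕ → α) (L R m M : ℕ) : Prop :=
  ∀ r < L, ∀ p < R * (M - 1), 0 < p → ¬ Repeats w r (max m (p / R + 1)) p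

instance [DecidableEq α] : Decidable (NoShortRepetition w L R m M) :=
  inferInstanceAs (Decidable (∀ _ < _, _))

theorem mul_le_of_noShortRepetition (hL : 0 < L) (hspan : (R + 1) * (M - 1) ≤ 2 * L)
    (hshort : ∀ q,
      NoShortRepetition (blockSubst L f (triple (z q) (z (q + 1)) (z (q + 2)))) L R m M)
    (hmu : m ≤ u) (huM : u < M) (hp : 0 < p) (h : Repeats (blockSubst L f z) s u p) :
    R * u ≤ p := by
  by_contra! hlt
  have hpR : p / R < u := Nat.div_lt_of_lt_mul hlt
  have hRu : R * u ≤ R * (M - 1) := Nat.mul_le_mul_left R (by omega)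
  have hr : s % L < L := Nat.mod_lt s hL
  have visible {i l : ℕ} (hi : i + l ≤ 3 * L) :
      window (blockSubst L f z) (L * (s / L) + i) l = window (blockSubst L f
        (triple (z (s / L)) (z (s / L + 1)) (z (s / L + 2)))) i l :=
    window_blockSubst hL fun k hk =>
      apply_add_eq_triple_of_lt_three (Nat.lt_of_mul_lt_mul_left (a := L) (by linarith))
  refine hshort (s / L) (s % L) hr p (by omega) hp ?_
  have hle : max m (p / R + 1) ≤ u := by omega
  have hend : s % L + p + u ≤ 3 * L := by
    rw [add_mul, one_mul] at hspan
    omega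
  have h' := h.of_le hle
  rw [← Nat.div_add_mod s L] at h'
  rw [Repeats, add_assoc, visible (by omega), visible (by omega)] at h'
  exact h'

/-- Windows of `w` determine the desubstitution of `w` into `z` along blocks of length `L`: windows
of length `m` determine the position in the block, and windows of length `n` at a known position
determine the letter of `z` whose block covers the position `c` places to the right. -/
structure IsRecognizable (w : ℕ → α) (z : ℕ → β) (L m n c : ℕ) : Prop where
  mod_eq : ∀ ⦃s t⦄, window w s m = window w t m → s % L = t % L
  apply_eq : ∀ ⦃s t⦄, s % L = t % L → window w s n = window w t n →
    z ((s + c) / L) = z ((t + c) / L)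

theorem exists_add_div_eq (hL : 0 < L) {a d k : ℕ} (hk : a / L ≤ k) (hk' : k ≤ (a + d) / L) :
    ∃ j ≤ d, (a + j) / L = k := by
  have hd : L * k ≤ a + d := (Nat.mul_le_mul_left L hk').trans (Nat.mul_div_le _ _)
  refine ⟨L * k - a, by omega, ?_⟩
  rcases le_total (L * k) a with h | h
  · rw [Nat.sub_eq_zero_of_le h, add_zero]
    exact hk.antisymm ((Nat.le_div_iff_mul_le hL).2 (by rwa [mul_comm]))
  · rw [Nat.add_sub_cancel' h, Nat.mul_div_cancel_left k hL]

theorem IsRecognizable.exists_repeats (hw : IsRecognizable w z L m n c) (hL : 0 < L)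
    (hm : m ≤ u) (hn : n ≤ u) (hp : 0 < p) (h : Repeats w s u p) :
    ∃ s' u' p', p = L * p' ∧ 0 < p' ∧ 0 < u' ∧ u < L * u' + n ∧ Repeats z s' u' p' := by
  have hmod : s ≡ s + p [MOD L] := hw.mod_eq (h.of_le hm)
  obtain ⟨p', rfl⟩ : L ∣ p := by
    simpa only [Nat.add_sub_cancel_left] using (Nat.modEq_iff_dvd' (Nat.le_add_right s p)).1 hmod
  have hletter {j : ℕ} (hj : j + n ≤ u) : z ((s + c + j) / L) = z ((s + c + j) / L + p') := by
    have := hw.apply_eq (hmod.add_right j) (h.window_eq hj)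
    rwa [show s + L * p' + j + c = s + c + j + L * p' by ring, Nat.add_mul_div_left _ _ hL,
      show s + j + c = s + c + j by ring] at this
  have hle : (s + c) / L ≤ (s + c + (u - n)) / L := Nat.div_le_div_right (by omega)
  refine ⟨(s + c) / L, (s + c + (u - n)) / L - (s + c) / L + 1, p', rfl,
    Nat.pos_of_mul_pos_left hp, by omega, ?_, window_eq_window_iff.2 fun l hl => ?_⟩
  · have hfirst : L * ((s + c) / L) ≤ s + c := Nat.mul_div_le _ _
    have hlast : s + c + (u - n) < L * ((s + c + (u - n)) / L + 1) := Nat.lt_mul_div_succ _ hL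
    have hsplit : L * ((s + c + (u - n)) / L + 1) =
        L * ((s + c) / L) + L * ((s + c + (u - n)) / L - (s + c) / L + 1) := by
      rw [← mul_add, ← add_assoc, Nat.add_sub_of_le hle]
    omega
  · obtain ⟨j, hj, hjl⟩ : ∃ j ≤ u - n, (s + c + j) / L = (s + c) / L + l :=
      exists_add_div_eq hL (by omega) (by omega)
    rw [add_right_comm, ← hjl]
    exact hletter (by omega)

theorem mul_le_mul_of_lt_mul_add {u' p' : ℕ} (hR : R * (n - 1 + L) ≤ R' * L) (hu' : 0 < u')
    (hu : u < L * u' + n) (h : R' * u' ≤ p') : R * u ≤ L * p' :=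
  have hu : u ≤ (n - 1 + L) * u' := by
    have := Nat.le_mul_of_pos_right (n - 1) hu'
    rw [add_mul]
    omega
  calc
    R * u ≤ R * ((n - 1 + L) * u') := Nat.mul_le_mul_left R hu
    _ = R * (n - 1 + L) * u' := (mul_assoc _ _ _).symm
    _ ≤ R' * L * u' := Nat.mul_le_mul_right u' hR
    _ = L * (R' * u') := by ring
    _ ≤ L * p' := Nat.mul_le_mul_left L h

theorem mul_le_of_repeats_blockSubst (hL : 1 < L) (hspan : (R + 1) * (M - 1) ≤ 2 * L) (hnM : n ≤ M)
    (hR : R * (n - 1 + L) ≤ R' * L)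
    (hshort : ∀ q,
      NoShortRepetition (blockSubst L f (triple (z q) (z (q + 1)) (z (q + 2)))) L R m M)
    (hrec : IsRecognizable (blockSubst L f z) z L M n c)
    (hz : ∀ p' < p, ∀ ⦃s' u'⦄, 0 < u' → 0 < p' → Repeats z s' u' p' → R' * u' ≤ p')
    (hmu : m ≤ u) (hp : 0 < p) (h : Repeats (blockSubst L f z) s u p) : R * u ≤ p := by
  rcases lt_or_ge u M with huM | huM
  · exact mul_le_of_noShortRepetition (by omega) hspan hshort hmu huM hp h
  · obtain ⟨s', u', p', rfl, hp', hu', hu, h'⟩ :=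
      hrec.exists_repeats (by omega) huM (hnM.trans huM) hp h
    exact mul_le_mul_of_lt_mul_add hR hu' hu (hz p' (lt_mul_left hp' hL) hu' hp' h')

end Descent

section PrefixTree

variable {k : ℕ} {α β τ : Type*}

/-- The left quotient by the letter `a` of a list of tagged words: keep the words that start with
`a` and remove that letter. -/
def quotient [DecidableEq α] (E : List (List α × τ)) (a : α) : List (List α × τ) :=
  E.filterMap fun
    | ([], _) => none
    | (b :: v, t) => if b = a then some (v, t) else none

theorem mem_quotient_of_cons_mem [DecidableEq α] {E : List (List α × τ)} {a : α} {v : List α}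
    {t : τ} (h : (a :: v, t) ∈ E) : (v, t) ∈ quotient E a :=
  List.mem_filterMap.2 ⟨_, h, if_pos rfl⟩

/-- The test that words in `E` with the same prefix of length `n` have the same tag. Iterating
quotients descends the prefix tree of `E`, which is much faster than comparing all pairs of
words. -/
def separates [DecidableEq τ] : ℕ → List (List (Fin k) × τ) → Bool
  | 0, E => E.all fun e => E.all fun e' => e.2 = e'.2
  | n + 1, E => (List.finRange k).all fun a => separates n (quotient E a)

theorem tag_eq_of_separates [DecidableEq τ] {t t' : τ} :
    ∀ {v : List (Fin k)} {E : List (List (Fin k) × τ)}, separates v.length E →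
      (v, t) ∈ E → (v, t') ∈ E → t = t'
  | [], E, hE, h, h' => by
    simp only [List.length_nil, separates, List.all_eq_true, decide_eq_true_eq] at hE
    exact hE _ h _ h'
  | a :: v, E, hE, h, h' => by
    simp only [List.length_cons, separates, List.all_eq_true] at hE
    exact tag_eq_of_separates (hE a (List.mem_finRange a)) (mem_quotient_of_cons_mem h)
      (mem_quotient_of_cons_mem h')

/-- Some word in the tagged list `E` has the prefix `v`. -/
def HasPrefix [DecidableEq α] (E : List (List α × τ)) (v : List α) : Prop :=
  v.foldl quotient E ≠ []

instance [DecidableEq α] [DecidableEq τ] (E : List (List α × τ)) :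
    DecidablePred (HasPrefix E) :=
  fun v => inferInstanceAs (Decidable (v.foldl quotient E ≠ []))

theorem hasPrefix_of_append_mem [DecidableEq α] {t : τ} {v' : List α} :
    ∀ {v : List α} {E : List (List α × τ)}, (v ++ v', t) ∈ E → HasPrefix E v
  | [], _, h => List.ne_nil_of_mem h
  | _ :: v, _, h => hasPrefix_of_append_mem (v := v) (mem_quotient_of_cons_mem h)

variable {P : List (β × β)} {L m c : ℕ} {f : β → ℕ → α} {z : ℕ → β}

/-- The windows of length `m` of the words `blockSubst L f z`, where consecutive letters of `z` are
in `P`. A window is tagged with its position in the block where it starts and with the letter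
whose block covers the position `c` places to the right. -/
def taggedWindows (P : List (β × β)) (L : ℕ) (f : β → ℕ → α) (m c : ℕ) :
    List (List α × ℕ × β) :=
  P.flatMap fun (a, b) => (List.range L).map fun r =>
    (window (blockSubst L f (triple a b b)) r m, r, triple a b b ((r + c) / L))

theorem mem_taggedWindows (hL : 0 < L) (hm : m ≤ L + 1) (hc : c ≤ L)
    (hz : ∀ n, (z n, z (n + 1)) ∈ P) (s : ℕ) :
    (window (blockSubst L f z) s m, s % L, z ((s + c) / L)) ∈ taggedWindows P L f m c := by
  have hs : s % L < L := Nat.mod_lt s hL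
  refine List.mem_flatMap.2 ⟨_, hz (s / L), List.mem_map.2 ⟨s % L, List.mem_range.2 hs, ?_⟩⟩
  have hwindow : window (blockSubst L f z) s m =
      window (blockSubst L f (triple (z (s / L)) (z (s / L + 1)) (z (s / L + 1)))) (s % L) m := by
    conv_lhs => rw [← Nat.div_add_mod s L]
    exact window_blockSubst hL fun k hk =>
      apply_add_eq_triple_of_lt_two (Nat.lt_of_mul_lt_mul_left (a := L) (by omega))
  have hletter : z ((s + c) / L) =
      triple (z (s / L)) (z (s / L + 1)) (z (s / L + 1)) ((s % L + c) / L) := by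
    conv_lhs => rw [← Nat.div_add_mod s L, add_assoc, Nat.mul_add_div hL]
    exact apply_add_eq_triple_of_lt_two (Nat.div_lt_of_lt_mul (by omega))
  rw [hwindow, hletter]

theorem isRecognizable_of_separates [DecidableEq β] {f : β → ℕ → Fin k} (hL : 0 < L)
    (hm : m ≤ L + 1) (hc : c ≤ L) (hz : ∀ n, (z n, z (n + 1)) ∈ P)
    (hsep : separates m (taggedWindows P L f m c)) :
    IsRecognizable (blockSubst L f z) z L m m c := by
  have htag {s t : ℕ} (h : window (blockSubst L f z) s m = window (blockSubst L f z) t m) :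
      (s % L, z ((s + c) / L)) = (t % L, z ((t + c) / L)) :=
    tag_eq_of_separates (by rwa [length_window]) (mem_taggedWindows hL hm hc hz s)
      (h ▸ mem_taggedWindows hL hm hc hz t)
  exact ⟨fun _ _ h => congrArg Prod.fst (htag h), fun _ _ _ h => congrArg Prod.snd (htag h)⟩

theorem hasPrefix_taggedWindows [DecidableEq α] (hL : 0 < L) (hm : m ≤ L + 1) (hc : c ≤ L)
    (hz : ∀ n, (z n, z (n + 1)) ∈ P) {v : List α} (hv : v.length ≤ m)
    (h : IsFactorOfInf v (blockSubst L f z)) : HasPrefix (taggedWindows P L f m c) v := by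
  obtain ⟨s, hs⟩ := isFactorOfInf_iff_exists_window.1 h
  have hsplit : window (blockSubst L f z) s m =
      v ++ window (blockSubst L f z) (s + v.length) (m - v.length) := by
    conv_lhs => rw [← Nat.add_sub_of_le hv, window_add, ← hs]
  exact hasPrefix_of_append_mem (hsplit ▸ mem_taggedWindows hL hm hc hz s)

end PrefixTree

section Skeleton

/-- The pairs `(a, b)` of letters of `ℤ/8` with `b - a ∈ {1, 2, 3}`. -/
def stepPairs : List (Fin 8 × Fin 8) :=
  (List.finRange 8).flatMap fun a => [(a, a + 1), (a, a + 2), (a, a + 3)]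

theorem add_mem_stepPairs :
    ∀ a {b c : Fin 8}, (b, c) ∈ stepPairs → (a + b, a + c) ∈ stepPairs := by
  decide +kernel

/-- The offsets within a block of `skeleton`, found by computer search. -/
def skeletonOffset (r : ℕ) : Fin 8 := [0, 1, 3, 5, 7, 2, 4, 5, 6, 1, 4, 7, 0].getD r 0

/-- The blocks of the 13-uniform morphism on `ℤ/8` that fixes `skeleton`. It commutes with
translations of `ℤ/8`. -/
def skeletonBlock (a : Fin 8) (r : ℕ) : Fin 8 := a + skeletonOffset r

/-- The fixed point starting with `0` of the 13-uniform morphism given by `skeletonBlock`. -/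
def skeleton (n : ℕ) : Fin 8 := ((Nat.digits 13 n).map skeletonOffset).sum

theorem blockSubst_skeleton : blockSubst 13 skeletonBlock skeleton = skeleton := by
  funext n
  rcases n.eq_zero_or_pos with rfl | hn
  · rfl
  · simp [blockSubst, skeletonBlock, skeleton, Nat.digits_def' (by norm_num : 1 < 13) hn, add_comm]

theorem skeleton_mul_add (q : ℕ) {r : ℕ} (hr : r < 13) :
    skeleton (13 * q + r) = skeleton q + skeletonOffset r := by
  conv_lhs => rw [← blockSubst_skeleton]
  simp only [blockSubst, skeletonBlock, Nat.mul_add_div (by norm_num : 0 < 13), Nat.mul_add_mod,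
    Nat.div_eq_of_lt hr, Nat.mod_eq_of_lt hr, add_zero]

-- The offsets start and end with `0`, so the step across a block border is a step of `skeleton`.
theorem skeleton_step (n : ℕ) : (skeleton n, skeleton (n + 1)) ∈ stepPairs := by
  induction n using Nat.strong_induction_on with
  | _ n ih =>
    obtain ⟨q, r, hr, rfl⟩ : ∃ q r, r < 13 ∧ n = 13 * q + r :=
      ⟨n / 13, n % 13, Nat.mod_lt _ (by norm_num), (Nat.div_add_mod n 13).symm⟩
    rcases Nat.lt_succ_iff_lt_or_eq.1 hr with hr' | rfl
    · have hstep : ∀ r < 12, (skeletonOffset r, skeletonOffset (r + 1)) ∈ stepPairs := by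
        decide +kernel
      rw [add_assoc, skeleton_mul_add q hr, skeleton_mul_add q (Nat.succ_lt_succ hr')]
      exact add_mem_stepPairs _ (hstep r hr')
    · have hnext : skeleton (13 * q + 12 + 1) = skeleton (q + 1) + 0 :=
        skeleton_mul_add (q + 1) (r := 0) (by norm_num)
      rw [hnext, skeleton_mul_add q hr]
      simpa [skeletonOffset] using ih q (by omega)

theorem skeleton_noShortRepetition : ∀ a b c, (a, b) ∈ stepPairs → (b, c) ∈ stepPairs →
    NoShortRepetition (blockSubst 13 skeletonBlock (triple a b c)) 13 4 1 5 := by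
  decide +kernel

theorem separates_skeletonWindows :
    separates 5 (taggedWindows stepPairs 13 skeletonBlock 5 0) := by
  decide +kernel

theorem isRecognizable_skeleton :
    IsRecognizable (blockSubst 13 skeletonBlock skeleton) skeleton 13 5 1 0 where
  mod_eq := (isRecognizable_of_separates (by norm_num) (by norm_num) (by norm_num) skeleton_step
    separates_skeletonWindows).mod_eq
  apply_eq s t hmod h := by
    have h0 := window_eq_window_iff.1 h 0 one_pos
    simpa [blockSubst, skeletonBlock, hmod] using h0

theorem repetitionBound_skeleton : RepetitionBound skeleton 4 1 := by
  intro s u p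
  induction p using Nat.strong_induction_on generalizing s u with
  | _ p ih =>
    intro hu hp h
    refine mul_le_of_repeats_blockSubst (R' := 4) (by norm_num) (by norm_num) (by norm_num)
      (by norm_num)
      (fun q => skeleton_noShortRepetition _ _ _ (skeleton_step q) (skeleton_step (q + 1)))
      isRecognizable_skeleton (fun p' hp' _ _ hu' => ih p' hp' hu') hu hp
      (blockSubst_skeleton.symm ▸ h)

end Skeleton

section TernaryWord

/-- The blocks of the 24-uniform morphism from `skeleton` to the ternary word that avoids both
formulas, found by computer search. -/
def ternaryBlock : Fin 8 → ℕ → Fin 3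
  | 0, r => [1, 2, 2, 2, 0, 1, 1, 1, 0, 0, 0, 2, 0, 2, 1, 0, 1, 0, 2, 2, 2, 0, 0, 0].getD r 0
  | 1, r => [1, 2, 2, 1, 1, 1, 0, 0, 2, 2, 0, 1, 1, 2, 0, 2, 1, 1, 0, 2, 2, 2, 0, 0].getD r 0
  | 2, r => [1, 1, 1, 0, 0, 2, 0, 1, 2, 2, 2, 1, 1, 1, 2, 0, 0, 0, 1, 0, 2, 2, 2, 0].getD r 0
  | 3, r => [1, 1, 2, 1, 0, 0, 2, 2, 1, 1, 1, 0, 2, 0, 2, 1, 2, 1, 0, 1, 0, 2, 2, 0].getD r 0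
  | 4, r => [1, 1, 2, 2, 1, 0, 0, 0, 2, 0, 1, 2, 2, 2, 0, 0, 0, 1, 0, 2, 0, 2, 1, 0].getD r 0
  | 5, r => [1, 1, 1, 2, 1, 2, 0, 2, 0, 1, 2, 2, 2, 1, 0, 0, 0, 2, 1, 2, 0, 0, 1, 0].getD r 0
  | 6, r => [1, 1, 2, 2, 2, 1, 1, 0, 0, 2, 2, 0, 0, 1, 1, 2, 0, 2, 1, 0, 0, 0, 1, 0].getD r 0
  | 7, r => [1, 1, 1, 0, 2, 2, 2, 0, 1, 2, 1, 0, 0, 0, 2, 1, 1, 1, 2, 1, 2, 0, 0, 0].getD r 0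

/-- The image of `skeleton` under the 24-uniform morphism given by `ternaryBlock`. -/
def ternaryWord : ℕ → Fin 3 := blockSubst 24 ternaryBlock skeleton

/-- The windows of length 9 of `ternaryWord`, with the data needed to desubstitute them. -/
def ternaryWindows : List (List (Fin 3) × ℕ × Fin 8) :=
  taggedWindows stepPairs 24 ternaryBlock 9 4

theorem ternaryWord_noShortRepetition : ∀ a b c, (a, b) ∈ stepPairs → (b, c) ∈ stepPairs →
    NoShortRepetition (blockSubst 24 ternaryBlock (triple a b c)) 24 3 3 9 := by
  decide +kernel

theorem separates_ternaryWindows : separates 9 ternaryWindows := by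
  decide +kernel

theorem repetitionBound_ternaryWord : RepetitionBound ternaryWord 3 3 := fun _ _ _ hu hp h =>
  mul_le_of_repeats_blockSubst (by norm_num) (by norm_num) le_rfl (by norm_num)
    (fun q => ternaryWord_noShortRepetition _ _ _ (skeleton_step q) (skeleton_step (q + 1)))
    (isRecognizable_of_separates (by norm_num) (by norm_num) (by norm_num) skeleton_step
      separates_ternaryWindows)
    (fun _ _ _ _ hu' hp' h' => repetitionBound_skeleton hu' hp' h') hu hp h

theorem hasPrefix_ternaryWindows {v : List (Fin 3)} (hv : v.length ≤ 9)
    (h : IsFactorOfInf v ternaryWord) : HasPrefix ternaryWindows v :=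
  hasPrefix_taggedWindows (by norm_num) (by norm_num) (by norm_num) skeleton_step hv h

/-- The ternary words of length `1` or `2`. -/
def shortWords : List (List (Fin 3)) :=
  (List.finRange 3).flatMap fun a => [a] :: (List.finRange 3).map fun b => [a, b]

theorem mem_shortWords : ∀ {v : List (Fin 3)}, v ≠ [] → v.length ≤ 2 → v ∈ shortWords
  | [a], _, _ => by revert a; decide
  | [a, b], _, _ => by revert a b; decide

theorem not_hasPrefix_of_mem_shortWords : ∀ A ∈ shortWords, ∀ B ∈ shortWords, ∀ C ∈ shortWords,
    HasPrefix ternaryWindows (A ++ B ++ C ++ A) → HasPrefix ternaryWindows (C ++ A ++ B ++ C) →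
      ¬ (HasPrefix ternaryWindows (B ++ C ++ B) ∨ HasPrefix ternaryWindows (B ++ A ++ B)) := by
  decide +kernel

theorem ternaryWord_avoids {A B C : List (Fin 3)} (hA : A ≠ []) (hB : B ≠ []) (hC : C ≠ [])
    (hABCA : IsFactorOfInf (A ++ B ++ C ++ A) ternaryWord)
    (hCABC : IsFactorOfInf (C ++ A ++ B ++ C) ternaryWord) :
    ¬ (IsFactorOfInf (B ++ C ++ B) ternaryWord ∨ IsFactorOfInf (B ++ A ++ B) ternaryWord) := by
  intro hBCB
  obtain ⟨hA2, hB2, hC2⟩ :=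
    length_le_two_of_repetitionBound repetitionBound_ternaryWord hA hB hC hABCA hCABC hBCB
  refine not_hasPrefix_of_mem_shortWords A (mem_shortWords hA hA2) B (mem_shortWords hB hB2)
    C (mem_shortWords hC hC2) (hasPrefix_ternaryWindows ?_ hABCA)
    (hasPrefix_ternaryWindows ?_ hCABC)
    (hBCB.imp (hasPrefix_ternaryWindows ?_) (hasPrefix_ternaryWindows ?_)) <;>
  · simp only [List.length_append]
    omega

end TernaryWord

/-- There exists an infinite word over a 3-letter alphabet that simultaneously
avoids the formula `ABCA.CABC.BCB` and its reverse `ABCA.BCAB.CBC`. -/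
theorem stmt_10 :
    ∃ x : ℕ → Fin 3,
      (¬ ∃ hA hB hC : List (Fin 3),
          hA ≠ [] ∧ hB ≠ [] ∧ hC ≠ [] ∧
          IsFactorOfInf (hA ++ hB ++ hC ++ hA) x ∧
          IsFactorOfInf (hC ++ hA ++ hB ++ hC) x ∧
          IsFactorOfInf (hB ++ hC ++ hB) x) ∧
      (¬ ∃ hA hB hC : List (Fin 3),
          hA ≠ [] ∧ hB ≠ [] ∧ hC ≠ [] ∧
          IsFactorOfInf (hA ++ hB ++ hC ++ hA) x ∧
          IsFactorOfInf (hB ++ hC ++ hA ++ hB) x ∧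
          IsFactorOfInf (hC ++ hB ++ hC) x) := by
  refine ⟨ternaryWord, ?_, ?_⟩
  · rintro ⟨A, B, C, hA, hB, hC, hABCA, hCABC, hBCB⟩
    exact ternaryWord_avoids hA hB hC hABCA hCABC (Or.inl hBCB)
  · rintro ⟨A, B, C, hA, hB, hC, hABCA, hBCAB, hCBC⟩
    exact ternaryWord_avoids hB hC hA hBCAB hABCA (Or.inr hCBC)
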